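/- Let n and k be positive integers with k < n/2, and let P_k^n be the binary Krawtchouk polynomial of degree k, i.e. the unique real polynomial satisfying P_k^n(x) = Σ_{j=0}^{k} (−1)^j · C(x, j) · C(n−x, k−j) for all real x, where C(x, j) = x(x−1)···(x−j+1)/j! is the generalized binomial coefficient. Then all roots of P_k^n are real, lie in the open interval (0, n), and any two distinct roots differ by at least 2. -/

import Mathlib

/-!
Write `P_k` for the Krawtchouk polynomial `P_k^n`. The generating function
`∑ P_k(x) z^k = (1 - z)^x (1 + z)^(n - x)`, used here as a formal power series in `z` for fixed
real `x`, yields three identities: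

* `(k + 2) P_{k+2} = (n - 2x) P_{k+1} - (n - k) P_k` (three-term recurrence);
* `P_k^n(x) = P_k^{n-1}(x) + P_{k-1}^{n-1}(x)` and `P_k^n(x+1) = P_k^{n-1}(x) - P_{k-1}^{n-1}(x)`;
* `(n - x) P_k(x+1) = (n - 2k) P_k(x) - x P_k(x-1)` (difference equation).

*Real-rootedness.* For nonreal `z` the recurrence shows by induction that
`Im z * Im (P_{k+1}(z) * conj (P_k(z))) < 0`, so `P_{k+1}(z) ≠ 0` (`krawPoly_im_neg`).

*Location of the roots.* For `x ≤ 0`, and for `x ≥ n` after multiplication by `(-1)^k`, all terms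
of the defining sum are nonnegative and one is positive.

*Mesh greater than 1.* The same induction gives `P_{k+1}' P_k - P_{k+1} P_k' < 0` on the real line.
By the second pair of identities the Wronskian of `f = P_k^n` and its shift `f(· + 1)` is `-2` times
such an expression, so `f'(x) f(x+1) - f(x) f'(x+1) > 0` for all real `x`. If two roots
`q < u` had `u - q ≤ 1`, Rolle's theorem for `f(x) / f(x+1)` on `[q, u]` would produce a root of `f`
to the right of `u` at distance less than `1` from it; a rightmost such pair gives a contradiction
(`one_lt_mesh`).

*Mesh at least 2.* If roots `r < s` had `s - r < 2`, then `r` and `s`, both simple, would be the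
only roots between `m - 1` and `m + 1`, where `m` is their midpoint, so `f(m - 1)` and `f(m + 1)`
would both have sign opposite to `f(m)`. This contradicts the difference equation, whose
coefficients are positive (`two_le_mesh`).
-/

/-- Generalized binomial coefficient `C(x, j) = x(x-1)⋯(x-j+1)/j!`. -/
noncomputable def genChoose (x : ℝ) (j : ℕ) : ℝ :=
  (∏ i ∈ Finset.range j, (x - (i : ℝ))) / (j.factorial : ℝ)

/-- `IsKrawtchouk n k P` : `P` is the binary Krawtchouk polynomial `P_k^n`, i.e.
`P(x) = ∑_{j=0}^{k} (-1)^j C(x, j) C(n - x, k - j)` for all real `x`, of degree `k`. -/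
def IsKrawtchouk (n k : ℕ) (P : Polynomial ℝ) : Prop :=
  P.natDegree = k ∧ ∀ x : ℝ, P.eval x =
    ∑ j ∈ Finset.range (k + 1), (-1 : ℝ) ^ j * genChoose x j * genChoose ((n : ℝ) - x) (k - j)

open Polynomial in
/-- The Krawtchouk polynomial `P_k^a` for a real parameter `a`, defined by its three-term
recurrence in `k`; `eval_krawPoly` identifies its values with the explicit sum. -/
noncomputable def krawPoly (a : ℝ) : ℕ → ℝ[X]
  | 0 => 1
  | 1 => C a - 2 * X
  | k + 2 => C (1 / ((k : ℝ) + 2)) *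
      ((C a - 2 * X) * krawPoly a (k + 1) - C (a - k) * krawPoly a k)

/-! ### Generalized binomial coefficients -/

lemma genChoose_zero (x : ℝ) : genChoose x 0 = 1 := by simp [genChoose]

lemma genChoose_succ (x : ℝ) (j : ℕ) :
    ((j : ℝ) + 1) * genChoose x (j + 1) = (x - j) * genChoose x j := by
  have h : ((j.factorial : ℕ) : ℝ) ≠ 0 := by positivity
  have h' : (j : ℝ) + 1 ≠ 0 := by positivity
  simp only [genChoose, Finset.prod_range_succ, Nat.factorial_succ]
  push_cast
  field_simp

lemma genChoose_pascal (x : ℝ) (j : ℕ) :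
    genChoose (x + 1) (j + 1) = genChoose x (j + 1) + genChoose x j := by
  have h : ((j.factorial : ℕ) : ℝ) ≠ 0 := by positivity
  have h' : (j : ℝ) + 1 ≠ 0 := by positivity
  have e : ∏ i ∈ Finset.range (j + 1), (x + 1 - (i : ℝ))
      = (∏ i ∈ Finset.range j, (x - (i : ℝ))) * (x + 1) := by
    rw [Finset.prod_range_succ']
    push_cast
    simp
  simp only [genChoose, e, Nat.factorial_succ]
  rw [Finset.prod_range_succ]
  push_cast
  field_simp
  ring

lemma genChoose_pos {x : ℝ} {j : ℕ} (h : (j : ℝ) ≤ x) : 0 < genChoose x j := by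
  unfold genChoose
  refine div_pos (Finset.prod_pos fun i hi => ?_) (by positivity)
  have : (i : ℝ) < j := by exact_mod_cast Finset.mem_range.1 hi
  linarith

lemma genChoose_nonpos_sign {x : ℝ} (hx : x ≤ 0) (j : ℕ) : 0 ≤ (-1 : ℝ) ^ j * genChoose x j := by
  unfold genChoose
  rw [← mul_div_assoc]
  refine div_nonneg ?_ (by positivity)
  have : (-1 : ℝ) ^ j = ∏ i ∈ Finset.range j, (-1 : ℝ) := by simp
  rw [this, ← Finset.prod_mul_distrib]
  refine Finset.prod_nonneg fun i _ => ?_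
  have : (0 : ℝ) ≤ i := by positivity
  linarith

/-! ### The generating function and its identities -/

open PowerSeries in
/-- The formal binomial series `(1 + z)^y`. -/
noncomputable def binSeries (y : ℝ) : ℝ⟦X⟧ := PowerSeries.mk (genChoose y)

open PowerSeries in
/-- The formal binomial series `(1 - z)^x`. -/
noncomputable def altSeries (x : ℝ) : ℝ⟦X⟧ := PowerSeries.mk fun j => (-1 : ℝ) ^ j * genChoose x j

open PowerSeries in
/-- The series `(1 - z)^x (1 + z)^y`; for `y = a - x` it generates the values `P_k^a(x)`. -/
noncomputable def genSeries (x y : ℝ) : ℝ⟦X⟧ := altSeries x * binSeries y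

section series
open PowerSeries

lemma binSeries_add_one (y : ℝ) : binSeries (y + 1) = (1 + X) * binSeries y := by
  ext j
  cases j with
  | zero => simp [binSeries, add_mul, genChoose_zero]
  | succ j => simp [binSeries, add_mul, genChoose_pascal, coeff_succ_X_mul]

lemma altSeries_add_one (x : ℝ) : altSeries (x + 1) = (1 - X) * altSeries x := by
  ext j
  cases j with
  | zero => simp [altSeries, sub_mul, genChoose_zero]
  | succ j =>
    simp [altSeries, sub_mul, genChoose_pascal, coeff_succ_X_mul]
    ring

lemma binSeries_deriv (y : ℝ) : (1 + X) * d⁄dX ℝ (binSeries y) = C y * binSeries y := by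
  ext j
  have h0 := genChoose_succ y j
  cases j with
  | zero =>
    rw [add_mul, map_add, one_mul, coeff_zero_X_mul, coeff_derivative, coeff_C_mul]
    simp only [binSeries, coeff_mk]
    norm_num at h0 ⊢
    linarith
  | succ j =>
    simp [binSeries, add_mul, coeff_derivative, coeff_succ_X_mul] at h0 ⊢
    linarith

lemma altSeries_deriv (x : ℝ) : (1 - X) * d⁄dX ℝ (altSeries x) = -(C x * altSeries x) := by
  ext j
  have h0 := genChoose_succ x j
  cases j with
  | zero =>
    rw [sub_mul, map_sub, one_mul, coeff_zero_X_mul, coeff_derivative, map_neg, coeff_C_mul]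
    simp only [altSeries, coeff_mk]
    norm_num at h0 ⊢
    linarith
  | succ j =>
    simp [altSeries, sub_mul, coeff_derivative, coeff_succ_X_mul] at h0 ⊢
    linear_combination (-1) ^ (j+2) * h0

/-- The differential equation `(1 - z²) G' = ((y - x) - (y + x) z) G` for
`G = (1 - z)^x (1 + z)^y`. -/
lemma genSeries_deriv (x y : ℝ) :
    (1 - X ^ 2) * d⁄dX ℝ (genSeries x y) = (C (y - x) - C (y + x) * X) * genSeries x y := by
  have h1 := binSeries_deriv y
  have h2 := altSeries_deriv x
  simp only [genSeries, Derivation.leibniz, smul_eq_mul, map_sub, map_add]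
  linear_combination (1 - X) * altSeries x * h1 + (1 + X) * binSeries y * h2

lemma coeff_genSeries (x y : ℝ) (k : ℕ) : coeff k (genSeries x y) =
    ∑ j ∈ Finset.range (k + 1), (-1 : ℝ) ^ j * genChoose x j * genChoose y (k - j) := by
  rw [genSeries, coeff_mul, Finset.Nat.sum_antidiagonal_eq_sum_range_succ_mk]
  simp [altSeries, binSeries]

/-- Coefficient form of `genSeries_deriv`: the three-term recurrence in the degree. -/
lemma coeff_genSeries_rec (x y : ℝ) (k : ℕ) :
    ((k : ℝ) + 2) * coeff (k + 2) (genSeries x y) =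
      (y - x) * coeff (k + 1) (genSeries x y) - (y + x - k) * coeff k (genSeries x y) := by
  have h := congrArg (coeff (k + 1)) (genSeries_deriv x y)
  rw [sub_mul, sub_mul, one_mul, mul_assoc, map_sub, map_sub, coeff_C_mul, coeff_C_mul,
    coeff_succ_X_mul, pow_two, mul_assoc, coeff_succ_X_mul, coeff_derivative] at h
  cases k with
  | zero =>
    simp at h ⊢
    linarith
  | succ k =>
    rw [coeff_succ_X_mul, coeff_derivative] at h
    push_cast at h ⊢
    linarith

lemma coeff_genSeries_zero (x y : ℝ) : coeff 0 (genSeries x y) = 1 := by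
  simp [coeff_genSeries, genChoose_zero]

lemma coeff_genSeries_one (x y : ℝ) : coeff 1 (genSeries x y) = y - x := by
  simp [coeff_genSeries, Finset.sum_range_succ, genChoose]
  ring

lemma eval_krawPoly (a x : ℝ) (k : ℕ) :
    (krawPoly a k).eval x = coeff k (genSeries x (a - x)) := by
  induction k using Nat.strong_induction_on with
  | _ k ih =>
    match k with
    | 0 => simp [krawPoly, coeff_genSeries_zero]
    | 1 =>
      rw [coeff_genSeries_one]
      simp [krawPoly]
      ring
    | k + 2 =>
      have h := coeff_genSeries_rec x (a - x) k
      have h' : (k : ℝ) + 2 ≠ 0 := by positivity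
      simp only [krawPoly, Polynomial.eval_mul, Polynomial.eval_sub, Polynomial.eval_C,
        Polynomial.eval_X, Polynomial.eval_ofNat, ih k (by omega), ih (k + 1) (by omega)]
      field_simp
      linarith

lemma eval_krawPoly_add (a x : ℝ) (k : ℕ) : (krawPoly (a + 1) (k + 1)).eval x =
    (krawPoly a (k + 1)).eval x + (krawPoly a k).eval x := by
  have h : genSeries x (a + 1 - x) = genSeries x (a - x) + X * genSeries x (a - x) := by
    rw [genSeries, show a + 1 - x = (a - x) + 1 by ring, binSeries_add_one, genSeries]
    ring
  simp only [eval_krawPoly, h, map_add, coeff_succ_X_mul]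

lemma eval_krawPoly_sub (a x : ℝ) (k : ℕ) : (krawPoly (a + 1) (k + 1)).eval (x + 1) =
    (krawPoly a (k + 1)).eval x - (krawPoly a k).eval x := by
  have h : genSeries (x + 1) (a + 1 - (x + 1)) =
      genSeries x (a - x) - X * genSeries x (a - x) := by
    rw [genSeries, show a + 1 - (x + 1) = a - x by ring, altSeries_add_one, genSeries]
    ring
  simp only [eval_krawPoly, h, map_sub, coeff_succ_X_mul]

/-- The difference equation in `x`. The three generating series involved are `(1 - z)² G`,
`(1 - z²) G` and `(1 + z)² G` with `G = (1 - z)^(x-1) (1 + z)^(a-x-1)`, and the factor `a - 2k`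
comes from the operator `a - 2 z d/dz`. -/
lemma krawPoly_difference (a x : ℝ) (k : ℕ) :
    (a - x) * (krawPoly a k).eval (x + 1) =
      (a - 2 * k) * (krawPoly a k).eval x - x * (krawPoly a k).eval (x - 1) := by
  set G := genSeries (x - 1) (a - x - 1) with hG
  have e1 : genSeries (x + 1) (a - (x + 1)) = (1 - X) ^ 2 * G := by
    rw [hG, genSeries, genSeries, show x + 1 = (x - 1) + 1 + 1 by ring, altSeries_add_one,
      altSeries_add_one, show a - (x - 1 + 1 + 1) = a - x - 1 by ring]
    ring
  have e2 : genSeries (x - 1) (a - (x - 1)) = (1 + X) ^ 2 * G := by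
    rw [hG, genSeries, genSeries, show a - (x - 1) = (a - x - 1) + 1 + 1 by ring,
      binSeries_add_one, binSeries_add_one]
    ring
  have e3 : genSeries x (a - x) = (1 - X ^ 2) * G := by
    obtain ⟨u, rfl⟩ : ∃ u, x = u + 1 := ⟨x - 1, by ring⟩
    obtain ⟨v, rfl⟩ : ∃ v, a = v + 1 + (u + 1) := ⟨a - u - 2, by ring⟩
    rw [hG, genSeries, genSeries, altSeries_add_one,
      show v + 1 + (u + 1) - (u + 1) = v + 1 by ring, binSeries_add_one,
      show v + 1 - 1 = v by ring, show u + 1 - 1 = u by ring]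
    ring
  have hd := genSeries_deriv (x - 1) (a - x - 1)
  rw [← hG, show a - x - 1 - (x - 1) = a - 2 * x by ring,
    show a - x - 1 + (x - 1) = a - 2 by ring] at hd
  have key : C (a - x) * genSeries (x + 1) (a - (x + 1)) =
      C a * genSeries x (a - x) - C 2 * (X * d⁄dX ℝ (genSeries x (a - x)))
        - C x * genSeries (x - 1) (a - (x - 1)) := by
    rw [e1, e2, e3]
    have hX : d⁄dX ℝ (1 - X ^ 2 : ℝ⟦X⟧) = - (2 * X) := by
      simp [Derivation.leibniz_pow, derivative_X]
    rw [Derivation.leibniz, hX]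
    simp only [smul_eq_mul, map_sub, map_mul, map_ofNat] at hd ⊢
    linear_combination (2 * X) * hd
  have hk := congrArg (coeff k) key
  simp only [map_sub, coeff_C_mul, ← eval_krawPoly] at hk
  have hk2 : coeff k (X * d⁄dX ℝ (genSeries x (a - x))) = k * (krawPoly a k).eval x := by
    rw [eval_krawPoly]
    cases k with
    | zero => simp
    | succ k =>
      rw [coeff_succ_X_mul, coeff_derivative]
      push_cast
      ring
  rw [hk2] at hk
  simp only [← map_sub, coeff_C_mul, ← eval_krawPoly] at hk
  linarith

end series

/-! ### Wronskian inequalities and real-rootedness -/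

open Polynomial in
/-- Consecutive Krawtchouk polynomials have a negative Wronskian on the real line
(a confluent Christoffel–Darboux inequality). -/
lemma krawPoly_wronskian_neg (a x : ℝ) (k : ℕ) (hk : (k : ℝ) ≤ a) :
    (derivative (krawPoly a (k + 1))).eval x * (krawPoly a k).eval x
      - (krawPoly a (k + 1)).eval x * (derivative (krawPoly a k)).eval x < 0 := by
  induction k with
  | zero => simp [krawPoly]
  | succ k ih =>
    push_cast at hk
    have ih := ih (by linarith)
    have h' : (0 : ℝ) < (k : ℝ) + 2 := by positivity
    have hc : (0 : ℝ) < a - k := by linarith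
    have e : (derivative (krawPoly a (k + 1 + 1))).eval x * (krawPoly a (k + 1)).eval x
        - (krawPoly a (k + 1 + 1)).eval x * (derivative (krawPoly a (k + 1))).eval x
        = (-2 * (krawPoly a (k + 1)).eval x ^ 2 + (a - k) *
          ((derivative (krawPoly a (k + 1))).eval x * (krawPoly a k).eval x
      - (krawPoly a (k + 1)).eval x * (derivative (krawPoly a k)).eval x)) / ((k : ℝ) + 2) := by
      simp only [krawPoly, derivative_mul, derivative_sub, derivative_C, derivative_X,
        derivative_ofNat, eval_mul, eval_sub, eval_add, eval_C, eval_X, eval_ofNat, eval_zero,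
        eval_one]
      field_simp
      ring
    rw [e]
    refine div_neg_of_neg_of_pos ?_ h'
    nlinarith [mul_neg_of_pos_of_neg hc ih, sq_nonneg ((krawPoly a (k + 1)).eval x)]

open Polynomial in
/-- Complex counterpart of the Wronskian inequality; it excludes nonreal roots. -/
lemma krawPoly_im_neg (a : ℝ) (z : ℂ) (hz : z.im ≠ 0) (k : ℕ) (hk : (k : ℝ) ≤ a) :
    z.im * (aeval z (krawPoly a (k + 1)) * (starRingEnd ℂ) (aeval z (krawPoly a k))).im < 0 := by
  induction k with
  | zero =>
    have := mul_self_pos.2 hz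
    simp [krawPoly, map_ofNat]
    nlinarith
  | succ k ih =>
    push_cast at hk
    have ih := ih (by linarith)
    have h' : (0 : ℝ) < (k : ℝ) + 2 := by positivity
    have hc : (0 : ℝ) < a - k := by linarith
    have hr : aeval z (krawPoly a (k + 1 + 1)) = ((1 / ((k : ℝ) + 2) : ℝ) : ℂ) *
        (((a : ℂ) - 2 * z) * aeval z (krawPoly a (k + 1))
          - ((a - k : ℝ) : ℂ) * aeval z (krawPoly a k)) := by
      simp only [krawPoly, map_mul, map_sub, aeval_C, aeval_X, map_ofNat,
        Complex.coe_algebraMap, Complex.ofReal_sub]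
    rw [hr]
    set p := aeval z (krawPoly a (k + 1))
    set q := aeval z (krawPoly a k)
    have e : z.im * (((1 / ((k : ℝ) + 2) : ℝ) : ℂ) * (((a : ℂ) - 2 * z) * p
          - ((a - k : ℝ) : ℂ) * q) * (starRingEnd ℂ) p).im =
        (-2 * (z.im * z.im) * (p.re ^ 2 + p.im ^ 2)
          + (a - k) * (z.im * (p * (starRingEnd ℂ) q).im)) / ((k : ℝ) + 2) := by
      rw [mul_assoc, Complex.im_ofReal_mul]
      simp only [Complex.mul_im, Complex.mul_re, Complex.sub_re, Complex.sub_im,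
        Complex.ofReal_re, Complex.ofReal_im, Complex.conj_re, Complex.conj_im,
        Complex.re_ofNat, Complex.im_ofNat]
      field_simp
      ring
    rw [e]
    refine div_neg_of_neg_of_pos ?_ h'
    nlinarith [mul_neg_of_pos_of_neg hc ih,
      mul_nonneg (mul_self_nonneg z.im) (add_nonneg (sq_nonneg p.re) (sq_nonneg p.im))]

open Polynomial in
lemma krawPoly_ne_zero (a : ℝ) (k : ℕ) (hk : (k : ℝ) ≤ a) : krawPoly a (k + 1) ≠ 0 := by
  intro h
  have := krawPoly_wronskian_neg a 0 k hk
  simp [h] at this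

open Polynomial in
lemma krawPoly_splits (a : ℝ) (k : ℕ) (hk : (k : ℝ) ≤ a) : (krawPoly a (k + 1)).Splits := by
  refine Splits.of_splits_map Complex.ofRealHom (IsAlgClosed.splits _) fun z hz => ?_
  have h0 : aeval z (krawPoly a (k + 1)) = 0 := by
    have := (mem_roots'.1 hz).2
    rwa [IsRoot.def, eval_map] at this
  have him : z.im = 0 := by
    by_contra hne
    have := krawPoly_im_neg a z hne k hk
    simp [h0] at this
  exact ⟨z.re, Complex.ext (by simp) (by simp [him])⟩

lemma IsKrawtchouk.eq_krawPoly {n k : ℕ} {P : Polynomial ℝ} (hP : IsKrawtchouk n k P) :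
    P = krawPoly n k :=
  Polynomial.funext fun x => by rw [hP.2, eval_krawPoly, coeff_genSeries]

/-! ### Location of the roots -/

lemma krawPoly_pos_of_nonpos {n k : ℕ} (hkn : k ≤ n) {x : ℝ} (hx : x ≤ 0) :
    0 < (krawPoly n k).eval x := by
  have hpos : ∀ j : ℕ, 0 < genChoose ((n : ℝ) - x) (k - j) := fun j => by
    refine genChoose_pos ?_
    have : ((k - j : ℕ) : ℝ) ≤ n := by exact_mod_cast (Nat.sub_le k j).trans hkn
    linarith
  rw [eval_krawPoly, coeff_genSeries]
  refine Finset.sum_pos' (fun j _ => mul_nonneg (genChoose_nonpos_sign hx j) (hpos j).le)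
    ⟨0, by simp, ?_⟩
  simpa [genChoose_zero] using hpos 0

lemma krawPoly_ne_zero_of_ge {n k : ℕ} (hkn : k ≤ n) {x : ℝ} (hx : (n : ℝ) ≤ x) :
    (krawPoly n k).eval x ≠ 0 := by
  have hpos : ∀ j ≤ k, 0 < genChoose x j := fun j hj => by
    refine genChoose_pos ?_
    have : (j : ℝ) ≤ n := by exact_mod_cast hj.trans hkn
    linarith
  have : 0 < (-1 : ℝ) ^ k * (krawPoly n k).eval x := by
    rw [eval_krawPoly, coeff_genSeries, Finset.mul_sum]
    have e : ∀ j ∈ Finset.range (k + 1), (-1 : ℝ) ^ k *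
        ((-1 : ℝ) ^ j * genChoose x j * genChoose (n - x) (k - j)) =
        genChoose x j * ((-1) ^ (k - j) * genChoose (n - x) (k - j)) := fun j hj => by
      have hj : j ≤ k := by simpa [Nat.lt_succ_iff] using hj
      have h2 : (-1 : ℝ) ^ k = (-1) ^ (k - j) * (-1) ^ j := by rw [← pow_add]; congr 1; omega
      have h3 : (-1 : ℝ) ^ j * (-1) ^ j = 1 := by rw [← mul_pow]; simp
      rw [h2]
      linear_combination (-1) ^ (k - j) * genChoose x j * genChoose (n - x) (k - j) * h3
    rw [Finset.sum_congr rfl e]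
    refine Finset.sum_pos' (fun j hj => mul_nonneg (hpos j ?_).le
      (genChoose_nonpos_sign (by linarith) _)) ⟨k, by simp, ?_⟩
    · simpa [Nat.lt_succ_iff] using hj
    · simpa [genChoose_zero] using hpos k le_rfl
  intro h
  simp [h] at this

/-! ### Distance between roots -/

open Polynomial in
/-- For `f = P_{k+1}^{a+1}`, with `f(x) = p + q` and `f(x+1) = p - q`, the Wronskian of `f` and its
shift is `-2 (p' q - p q') > 0`. -/
lemma krawPoly_shift_wronskian_pos (a x : ℝ) (k : ℕ) (hk : (k : ℝ) ≤ a) :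
    0 < (derivative (krawPoly (a + 1) (k + 1))).eval x * (krawPoly (a + 1) (k + 1)).eval (x + 1)
      - (krawPoly (a + 1) (k + 1)).eval x *
        (derivative (krawPoly (a + 1) (k + 1))).eval (x + 1) := by
  have h1 : krawPoly (a + 1) (k + 1) = krawPoly a (k + 1) + krawPoly a k :=
    Polynomial.funext fun y => by rw [eval_krawPoly_add, eval_add]
  have h2 : (krawPoly (a + 1) (k + 1)).comp (X + 1) = krawPoly a (k + 1) - krawPoly a k :=
    Polynomial.funext fun y => by
      rw [eval_comp, eval_add, eval_X, eval_one, eval_krawPoly_sub, eval_sub]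
  have h3 : (derivative (krawPoly (a + 1) (k + 1))).eval (x + 1) =
      (derivative (krawPoly a (k + 1))).eval x - (derivative (krawPoly a k)).eval x := by
    rw [← eval_sub, ← derivative_sub, ← h2, derivative_comp]
    simp
  have hw := krawPoly_wronskian_neg a x k hk
  rw [h3, eval_krawPoly_sub, h1, derivative_add, eval_add, eval_add]
  linarith

open Polynomial Classical in
/-- If `f' f(· + 1) - f f'(· + 1)` is positive everywhere, distinct roots of `f` are more
than `1` apart. -/
lemma one_lt_mesh {f : ℝ[X]} (hf : ∀ x, 0 < (derivative f).eval x * f.eval (x + 1)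
      - f.eval x * (derivative f).eval (x + 1)) {r s : ℝ} (hr : f.eval r = 0)
    (hs : f.eval s = 0) (hrs : r < s) : 1 < s - r := by
  have hf0 : f ≠ 0 := fun h => by simpa [h] using hf 0
  by_contra! hle
  -- `T` collects the right ends of the close pairs of roots; `u` is the rightmost of them.
  let T := f.roots.toFinset.filter fun s => ∃ r, f.eval r = 0 ∧ r < s ∧ s - r ≤ 1
  have hT : ∀ u, u ∈ T ↔ f.eval u = 0 ∧ ∃ r, f.eval r = 0 ∧ r < u ∧ u - r ≤ 1 := fun u => by
    simp [T, hf0]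
  obtain ⟨u, hu, hmax⟩ := T.exists_max_image id ⟨s, (hT s).2 ⟨hs, r, hr, hrs, hle⟩⟩
  obtain ⟨hu0, q, hq0, hqu, hle'⟩ := (hT u).1 hu
  obtain ⟨t, ht, ht0⟩ : ∃ t ∈ Set.Icc q u, f.eval (t + 1) = 0 := by
    by_contra! hne
    have hder : ∀ t ∈ Set.Icc q u, HasDerivAt (fun y => f.eval y / f.eval (y + 1))
        (((derivative f).eval t * f.eval (t + 1) - f.eval t * (derivative f).eval (t + 1))
          / f.eval (t + 1) ^ 2) t := fun t ht =>
      (f.hasDerivAt t).div ((f.hasDerivAt (t + 1)).comp_add_const t 1) (hne t ht)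
    obtain ⟨c, hc, hc0⟩ := exists_hasDerivAt_eq_zero hqu
      (fun t ht => (hder t ht).continuousAt.continuousWithinAt) (by simp [hq0, hu0])
      (fun t ht => hder t (Set.Ioo_subset_Icc_self ht))
    have hcI := Set.Ioo_subset_Icc_self hc
    exact hc0.le.not_gt (div_pos (hf c) (sq_pos_of_ne_zero (hne c hcI)))
  -- `t + 1` is a root beyond `u` with `t + 1 - u < 1`, against the choice of `u`.
  have hfq := hf q
  have hfu := hf u
  have htq : q ≠ t := by
    rintro rfl
    simp [hq0, ht0] at hfq
  have htu : t ≠ u := by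
    rintro rfl
    simp [hu0, ht0] at hfu
  have h1 := lt_of_le_of_ne ht.1 htq
  have h2 := lt_of_le_of_ne ht.2 htu
  have := hmax (t + 1) ((hT _).2 ⟨ht0, u, hu0, by linarith, by linarith⟩)
  simp only [id] at this
  linarith

open Polynomial in
lemma eval_mul_pos_of_ne_zero {f : ℝ[X]} {a b : ℝ} (hab : a ≤ b)
    (h : ∀ t ∈ Set.Icc a b, f.eval t ≠ 0) : 0 < f.eval a * f.eval b := by
  by_contra! hle
  have h0 : (0 : ℝ) ∈ Set.uIcc (f.eval a) (f.eval b) := by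
    rw [Set.mem_uIcc]
    rcases mul_nonpos_iff.1 hle with h | h
    · exact Or.inr ⟨h.2, h.1⟩
    · exact Or.inl ⟨h.1, h.2⟩
  obtain ⟨t, ht, ht0⟩ := intermediate_value_uIcc f.continuous.continuousOn h0
  rw [Set.uIcc_of_le hab] at ht
  exact h t ht ht0

open Polynomial in
/-- The step from mesh greater than `1` to mesh at least `2`; the difference equation is needed only
at the midpoint of the two roots. -/
lemma two_le_mesh {f : ℝ[X]} (hf : ∀ x, 0 < (derivative f).eval x * f.eval (x + 1)
      - f.eval x * (derivative f).eval (x + 1)) {r s A B D : ℝ} (hr : f.eval r = 0)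
    (hs : f.eval s = 0) (hrs : r < s) (hA : 0 < A) (hB : 0 < B) (hD : 0 < D)
    (hdiff : A * f.eval ((r + s) / 2 + 1) =
      B * f.eval ((r + s) / 2) - D * f.eval ((r + s) / 2 - 1)) : 2 ≤ s - r := by
  by_contra! hlt
  have hm := one_lt_mesh hf hr hs hrs
  set m := (r + s) / 2 with hmdef
  have hroot : ∀ t, f.eval t = 0 → t ≤ r - 1 ∨ t = r ∨ t = s ∨ s + 1 ≤ t := fun t ht => by
    by_contra! hc
    obtain ⟨h1, h2, h3, h4⟩ := hc
    rcases lt_or_gt_of_ne h2 with h | h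
    · have := one_lt_mesh hf ht hr h
      linarith
    · rcases lt_or_gt_of_ne h3 with h' | h'
      · have := one_lt_mesh hf hr ht h
        have := one_lt_mesh hf ht hs h'
        linarith
      · have := one_lt_mesh hf hs ht h'
        linarith
  have hne : ∀ t, r - 1 < t → t < s + 1 → t ≠ r → t ≠ s → f.eval t ≠ 0 :=
    fun t h1 h2 h3 h4 h0 => by
      rcases hroot t h0 with h | h | h | h
      · linarith
      · exact h3 h
      · exact h4 h
      · linarith
  -- At a root the inequality `hf` compares the sign of `f'` there with `f` one step to each side.
  have hr1 := hf r
  have hr2 := hf (r - 1)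
  have hs1 := hf s
  have hs2 := hf (s - 1)
  simp only [sub_add_cancel, hr, hs] at hr1 hr2 hs1 hs2
  have hR : f.eval (r - 1) ≠ 0 := fun h => by simp [h] at hr2
  have hS : f.eval (s + 1) ≠ 0 := fun h => by simp [h] at hs1
  -- Transitivity of having the same strict sign.
  have key : ∀ {u v w x y : ℝ}, 0 < u * v → 0 < v * w → 0 < w * x → 0 < x * y → 0 < u * y := by
    intro u v w x y h1 h2 h3 h4
    have h : 0 < (u * y) * ((v * w * x) ^ 2) := by
      have := mul_pos (mul_pos h1 h2) (mul_pos h3 h4)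
      nlinarith
    by_contra! hc
    exact (mul_nonpos_of_nonpos_of_nonneg hc (sq_nonneg _)).not_gt h
  have i1 : 0 < f.eval (r - 1) * f.eval (m - 1) := eval_mul_pos_of_ne_zero (by linarith)
    fun t ht => by
      rcases ht.1.eq_or_lt with h | h
      · rwa [← h]
      · exact hne t h (by linarith [ht.2]) (by linarith [ht.2] : t < r).ne
          (by linarith [ht.2] : t < s).ne
  have i2 : 0 < f.eval m * f.eval (r + 1) := eval_mul_pos_of_ne_zero (by linarith)
    fun t ht => hne t (by linarith [ht.1]) (by linarith [ht.2]) (by linarith [ht.1] : r < t).ne'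
      (by linarith [ht.2] : t < s).ne
  have i3 : 0 < f.eval (s - 1) * f.eval m := eval_mul_pos_of_ne_zero (by linarith)
    fun t ht => hne t (by linarith [ht.1]) (by linarith [ht.2]) (by linarith [ht.1] : r < t).ne'
      (by linarith [ht.2] : t < s).ne
  have i4 : 0 < f.eval (m + 1) * f.eval (s + 1) := eval_mul_pos_of_ne_zero (by linarith)
    fun t ht => by
      rcases ht.2.eq_or_lt with h | h
      · rwa [h]
      · exact hne t (by linarith [ht.1]) h (by linarith [ht.1] : r < t).ne'
          (by linarith [ht.1] : s < t).ne'
  have j1 : 0 < f.eval m * -f.eval (m - 1) :=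
    key i2 (w := (derivative f).eval r) (x := -f.eval (r - 1)) (by linarith) (by linarith)
      (by linarith)
  have j2 : 0 < f.eval m * -f.eval (m + 1) :=
    key (v := f.eval (s - 1)) (w := -(derivative f).eval s) (x := -f.eval (s + 1))
      (by linarith) (by linarith) (by linarith) (by linarith)
  have e : A * (f.eval m * -f.eval (m + 1)) + D * (f.eval m * -f.eval (m - 1))
      + B * f.eval m ^ 2 = 0 := by linear_combination (-f.eval m) * hdiff
  have := mul_pos hA j2
  have := mul_pos hD j1
  have := mul_nonneg hB.le (sq_nonneg (f.eval m))
  linarith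

theorem stmt_14 (n k : ℕ) (hn : 0 < n) (hk : 0 < k) (hkn : 2 * k < n)
    (P : Polynomial ℝ) (hP : IsKrawtchouk n k P) :
    P.roots.card = P.natDegree ∧
      (∀ r ∈ P.roots, 0 < r ∧ r < (n : ℝ)) ∧
      ∀ r ∈ P.roots, ∀ s ∈ P.roots, r ≠ s → 2 ≤ |r - s| := by
  have hPe := hP.eq_krawPoly
  have hrange : ∀ r ∈ P.roots, 0 < r ∧ r < (n : ℝ) := fun r hr => by
    have h0 : P.eval r = 0 := (Polynomial.mem_roots'.1 hr).2
    rw [hPe] at h0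
    constructor
    · by_contra! h
      exact (krawPoly_pos_of_nonpos (by omega) h).ne' h0
    · by_contra! h
      exact krawPoly_ne_zero_of_ge (by omega) h h0
  have hlt : ∀ r ∈ P.roots, ∀ s ∈ P.roots, r < s → 2 ≤ s - r := fun r hr s hs hrs => by
    obtain ⟨K, rfl⟩ : ∃ K, k = K + 1 := ⟨k - 1, by omega⟩
    obtain ⟨N, rfl⟩ : ∃ N, n = N + 1 := ⟨n - 1, by omega⟩
    have hKN : (K : ℝ) ≤ N := by exact_mod_cast (by omega : K ≤ N)
    have hkn' : (2 : ℝ) * ((K + 1 : ℕ) : ℝ) < ((N + 1 : ℕ) : ℝ) := by exact_mod_cast hkn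
    have hr' := hrange r hr
    have hs' := hrange s hs
    refine two_le_mesh (f := P) (fun x => ?_) (Polynomial.mem_roots'.1 hr).2
      (Polynomial.mem_roots'.1 hs).2 hrs (A := ((N + 1 : ℕ) : ℝ) - (r + s) / 2)
      (B := ((N + 1 : ℕ) : ℝ) - 2 * ((K + 1 : ℕ) : ℝ)) (D := (r + s) / 2)
      (by linarith) (by linarith) (by linarith) ?_
    · rw [hPe, Nat.cast_succ]
      exact krawPoly_shift_wronskian_pos N x K hKN
    · rw [hPe]
      exact krawPoly_difference _ _ _
  refine ⟨?_, hrange, fun r hr s hs hne => ?_⟩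
  · rw [← Polynomial.splits_iff_card_roots, hPe]
    obtain ⟨K, rfl⟩ : ∃ K, k = K + 1 := ⟨k - 1, by omega⟩
    exact krawPoly_splits _ _ (by exact_mod_cast (by omega : K ≤ n))
  · rcases lt_or_gt_of_ne hne with h | h
    · rw [abs_sub_comm]
      exact (hlt r hr s hs h).trans (le_abs_self _)
    · exact (hlt s hs r hr h).trans (le_abs_self _)
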